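/- arXiv:2108.00411 — 3 statements merged into one kernel-verified Lean document; each statement's English description precedes it below -/
import Mathlib

section
/- Let b be a slowly varying function on (0,∞) and let μ:(0,∞)→(0,∞) be a measurable function. If for some δ>0 both μ and the function t ↦ t/μ(t)^δ are almost increasing on (0,∞), then the composition b∘μ is slowly varying on (0,∞). -/
open Set MeasureTheory Real

/-- `f` is almost increasing on `S`: there is `C > 0` with `f s ≤ C * f t` whenever `s ≤ t` in `S`. -/
def AlmostIncreasingOn (f : ℝ → ℝ) (S : Set ℝ) : Prop :=
  ∃ C > (0:ℝ), ∀ s ∈ S, ∀ t ∈ S, s ≤ t → f s ≤ C * f t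

/-- `f` is almost decreasing on `S`: there is `C > 0` with `f t ≤ C * f s` whenever `s ≤ t` in `S`. -/
def AlmostDecreasingOn (f : ℝ → ℝ) (S : Set ℝ) : Prop :=
  ∃ C > (0:ℝ), ∀ s ∈ S, ∀ t ∈ S, s ≤ t → f t ≤ C * f s

/-- A measurable positive function `b` on `(0,∞)` is slowly varying if for every `ε > 0`,
`t ↦ t^ε * b t` is almost increasing and `t ↦ t^(-ε) * b t` is almost decreasing on `(0,∞)`. -/
def SlowlyVarying (b : ℝ → ℝ) : Prop :=
  Measurable b ∧ (∀ t ∈ Ioi (0:ℝ), 0 < b t) ∧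
  ∀ ε > (0:ℝ), AlmostIncreasingOn (fun t => t ^ ε * b t) (Ioi 0) ∧
    AlmostDecreasingOn (fun t => t ^ (-ε) * b t) (Ioi 0)

/-!
Split `t ^ ε * b (μ t) = (t / μ t ^ δ) ^ ε * (μ t ^ (δ * ε) * b (μ t))`. The first factor is a power
of an almost increasing function. In the second, `μ s ≤ K * μ t` for `s ≤ t` holds only up to a
constant `K`, but `f x = x ^ (δ * ε) * b x` satisfies `f (K * x) ≤ C * f x`, since `f` times a
negative power is almost decreasing.
The almost decreasing half is the same statement for `b⁻¹`, which is slowly varying as well.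
-/

section AlmostMonotone

variable {f g μ : ℝ → ℝ} {S : Set ℝ}

lemma AlmostIncreasingOn.congr (hf : AlmostIncreasingOn f S) (hfg : EqOn f g S) :
    AlmostIncreasingOn g S := by
  obtain ⟨C, hC, hf⟩ := hf
  refine ⟨C, hC, fun s hs t ht hst => ?_⟩
  rw [← hfg hs, ← hfg ht]
  exact hf s hs t ht hst

lemma AlmostIncreasingOn.mul (hf : AlmostIncreasingOn f S) (hg : AlmostIncreasingOn g S)
    (hf₀ : ∀ t ∈ S, 0 ≤ f t) (hg₀ : ∀ t ∈ S, 0 ≤ g t) :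
    AlmostIncreasingOn (fun t => f t * g t) S := by
  obtain ⟨C, hC, hf⟩ := hf
  obtain ⟨D, hD, hg⟩ := hg
  refine ⟨C * D, mul_pos hC hD, fun s hs t ht hst => ?_⟩
  calc f s * g s ≤ C * f t * (D * g t) :=
        mul_le_mul (hf s hs t ht hst) (hg s hs t ht hst) (hg₀ s hs) (mul_nonneg hC.le (hf₀ t ht))
    _ = C * D * (f t * g t) := mul_mul_mul_comm _ _ _ _

lemma AlmostIncreasingOn.rpow_const (hf : AlmostIncreasingOn f S) (hf₀ : ∀ t ∈ S, 0 ≤ f t)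
    {p : ℝ} (hp : 0 ≤ p) : AlmostIncreasingOn (fun t => f t ^ p) S := by
  obtain ⟨C, hC, hf⟩ := hf
  refine ⟨C ^ p, rpow_pos_of_pos hC p, fun s hs t ht hst => ?_⟩
  rw [← mul_rpow hC.le (hf₀ t ht)]
  exact rpow_le_rpow (hf₀ s hs) (hf s hs t ht hst) hp

lemma almostIncreasingOn_inv_iff (hf : ∀ t ∈ S, 0 < f t) :
    AlmostIncreasingOn (fun t => (f t)⁻¹) S ↔ AlmostDecreasingOn f S := by
  refine exists_congr fun C => and_congr_right fun _ => forall₂_congr fun s hs =>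
    forall₂_congr fun t ht => imp_congr_right fun _ => ?_
  beta_reduce
  rw [← div_eq_mul_inv, inv_eq_one_div, div_le_div_iff₀ (hf s hs) (hf t ht), one_mul]

lemma almostDecreasingOn_rpow_neg_mul_iff (hS : S ⊆ Ioi 0) (hf : ∀ t ∈ S, 0 < f t) {ε : ℝ} :
    AlmostDecreasingOn (fun t => t ^ (-ε) * f t) S ↔
      AlmostIncreasingOn (fun t => t ^ ε * (f t)⁻¹) S := by
  have hinv : EqOn (fun t => (t ^ (-ε) * f t)⁻¹) (fun t => t ^ ε * (f t)⁻¹) S := fun t ht => by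
    simp only [mul_inv, rpow_neg (hS ht).le, inv_inv]
  rw [← almostIncreasingOn_inv_iff fun t ht => mul_pos (rpow_pos_of_pos (hS ht) _) (hf t ht)]
  exact ⟨fun h => h.congr hinv, fun h => h.congr hinv.symm⟩

lemma AlmostDecreasingOn.exists_rpow_mul_dilation_le {a : ℝ}
    (hf : AlmostDecreasingOn (fun t => t ^ a * f t) (Ioi 0)) (c : ℝ) {K : ℝ} (hK : 1 ≤ K) :
    ∃ C > 0, ∀ x > 0, (K * x) ^ c * f (K * x) ≤ C * (x ^ c * f x) := by
  obtain ⟨D, hD, hf⟩ := hf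
  have hK₀ : 0 < K := one_pos.trans_le hK
  refine ⟨K ^ (c - a) * D, by positivity, fun x hx => ?_⟩
  have hKx : 0 < K * x := mul_pos hK₀ hx
  have split_rpow {y : ℝ} (hy : 0 < y) : y ^ c = y ^ (c - a) * y ^ a := by
    rw [← rpow_add hy, sub_add_cancel]
  calc (K * x) ^ c * f (K * x) = (K * x) ^ (c - a) * ((K * x) ^ a * f (K * x)) := by
        rw [split_rpow hKx, mul_assoc]
    _ ≤ (K * x) ^ (c - a) * (D * (x ^ a * f x)) :=
        mul_le_mul_of_nonneg_left (hf x hx _ hKx (le_mul_of_one_le_left hx.le hK))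
          (rpow_nonneg hKx.le _)
    _ = K ^ (c - a) * D * (x ^ c * f x) := by
        rw [mul_rpow hK₀.le hx.le, split_rpow hx]
        ring

lemma AlmostIncreasingOn.comp (hf : AlmostIncreasingOn f (Ioi 0))
    (hdil : ∀ K ≥ 1, ∃ C > 0, ∀ x > 0, f (K * x) ≤ C * f x)
    (hμ : AlmostIncreasingOn μ S) (hμpos : ∀ t ∈ S, 0 < μ t) :
    AlmostIncreasingOn (fun t => f (μ t)) S := by
  obtain ⟨A, hA, hf⟩ := hf
  obtain ⟨K, -, hμ⟩ := hμ
  obtain ⟨C, hC, hdil⟩ := hdil (max K 1) (le_max_right K 1)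
  refine ⟨A * C, mul_pos hA hC, fun s hs t ht hst => ?_⟩
  have hμt := hμpos t ht
  have hle : μ s ≤ max K 1 * μ t :=
    (hμ s hs t ht hst).trans (mul_le_mul_of_nonneg_right (le_max_left K 1) hμt.le)
  calc f (μ s) ≤ A * f (max K 1 * μ t) :=
        hf _ (hμpos s hs) _ ((hμpos s hs).trans_le hle) hle
    _ ≤ A * (C * f (μ t)) := by
        gcongr
        exact hdil _ hμt
    _ = A * C * f (μ t) := (mul_assoc _ _ _).symm

end AlmostMonotone

lemma SlowlyVarying.inv {b : ℝ → ℝ} (hb : SlowlyVarying b) : SlowlyVarying b⁻¹ := by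
  obtain ⟨hmeas, hpos, hmono⟩ := hb
  have hpos_inv : ∀ t ∈ Ioi (0 : ℝ), 0 < b⁻¹ t := fun t ht => inv_pos.2 (hpos t ht)
  refine ⟨hmeas.inv, hpos_inv, fun ε hε => ⟨?_, ?_⟩⟩
  · exact (almostDecreasingOn_rpow_neg_mul_iff Subset.rfl hpos).1 (hmono ε hε).2
  · rw [almostDecreasingOn_rpow_neg_mul_iff Subset.rfl hpos_inv]
    simpa only [Pi.inv_apply, inv_inv] using (hmono ε hε).1

lemma SlowlyVarying.almostIncreasingOn_rpow_mul_comp {b μ : ℝ → ℝ} {S : Set ℝ} {δ ε : ℝ}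
    (hb : SlowlyVarying b) (hS : S ⊆ Ioi 0) (hμpos : ∀ t ∈ S, 0 < μ t) (hδ : 0 < δ) (hε : 0 < ε)
    (hμ : AlmostIncreasingOn μ S) (hratio : AlmostIncreasingOn (fun t => t / μ t ^ δ) S) :
    AlmostIncreasingOn (fun t => t ^ ε * b (μ t)) S := by
  obtain ⟨-, hbpos, hbmono⟩ := hb
  obtain ⟨hinc, hdec⟩ := hbmono (δ * ε) (mul_pos hδ hε)
  have hμpow (p : ℝ) : ∀ t ∈ S, 0 < μ t ^ p := fun t ht => rpow_pos_of_pos (hμpos t ht) p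
  have hratio₀ : ∀ t ∈ S, 0 ≤ t / μ t ^ δ := fun t ht => div_nonneg (hS ht).le (hμpow δ t ht).le
  have hcomp : AlmostIncreasingOn (fun t => μ t ^ (δ * ε) * b (μ t)) S :=
    hinc.comp (fun _ hK => hdec.exists_rpow_mul_dilation_le (δ * ε) hK) hμ hμpos
  refine ((hratio.rpow_const hratio₀ hε.le).mul hcomp
    (fun t ht => rpow_nonneg (hratio₀ t ht) ε)
    (fun t ht => (mul_pos (hμpow _ t ht) (hbpos _ (hμpos t ht))).le)).congr fun t ht => ?_
  calc (t / μ t ^ δ) ^ ε * (μ t ^ (δ * ε) * b (μ t))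
      = t ^ ε / μ t ^ (δ * ε) * (μ t ^ (δ * ε) * b (μ t)) := by
        rw [div_rpow (hS ht).le (hμpow δ t ht).le, rpow_mul (hμpos t ht).le]
    _ = t ^ ε * b (μ t) := by
        rw [← mul_assoc, div_mul_cancel₀ _ (hμpow _ t ht).ne']

theorem slowly_varying_comp (b μ : ℝ → ℝ) (hb : SlowlyVarying b)
    (hμmeas : Measurable μ) (hμpos : ∀ t ∈ Ioi (0:ℝ), 0 < μ t)
    (δ : ℝ) (hδ : 0 < δ)
    (hμinc : AlmostIncreasingOn μ (Ioi 0))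
    (hratio : AlmostIncreasingOn (fun t => t / μ t ^ δ) (Ioi 0)) :
    SlowlyVarying (b ∘ μ) := by
  have hbμpos : ∀ t ∈ Ioi (0 : ℝ), 0 < (b ∘ μ) t := fun t ht => hb.2.1 _ (hμpos t ht)
  refine ⟨hb.1.comp hμmeas, hbμpos, fun ε hε => ⟨?_, ?_⟩⟩
  · exact hb.almostIncreasingOn_rpow_mul_comp Subset.rfl hμpos hδ hε hμinc hratio
  · rw [almostDecreasingOn_rpow_neg_mul_iff Subset.rfl hbμpos]
    exact hb.inv.almostIncreasingOn_rpow_mul_comp Subset.rfl hμpos hδ hε hμinc hratio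
end

section
/- Let 1 ≤ p ≤ ∞, let (σ_k)_{k∈ℤ} be a sequence of positive reals with sup_{k∈ℤ} σ_{k+1}/σ_k < 1, and let (x_k)_{k∈ℤ} be a non-negative sequence. Then there exists a constant C > 0, depending only on p and on sup_{k∈ℤ} σ_{k+1}/σ_k, such that ‖(σ_k · Σ_{m≤k} x_m)_{k∈ℤ}‖_{ℓ_p(ℤ)} ≤ C·‖(σ_k·x_k)_{k∈ℤ}‖_{ℓ_p(ℤ)}; together with the trivial reverse inequality ‖(σ_k·x_k)‖_{ℓ_p(ℤ)} ≤ ‖(σ_k · Σ_{m≤k} x_m)‖_{ℓ_p(ℤ)}, the two quantities are equivalent. -/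
open scoped ENNReal

/-- The `ℓ_p(ℤ)` norm (with values in `ℝ≥0∞`) of a non-negative sequence indexed by `ℤ`,
for `1 ≤ p ≤ ∞`. -/
noncomputable def zlpNorm (p : ℝ≥0∞) (y : ℤ → ℝ≥0∞) : ℝ≥0∞ :=
  if p = ∞ then ⨆ k, y k else (∑' k, y k ^ p.toReal) ^ (1 / p.toReal)

/-!
With `y = σ x`, the ratio condition gives `σ_k ≤ r ^ j σ_{k - j}`, so that
`σ_k ∑_{m ≤ k} x_m ≤ ∑_{j ≥ 0} r ^ j y_{k - j}`: the left side is dominated by a geometric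
combination of translates of `y`. Translations preserve the `ℓ_p(ℤ)` norm, so Minkowski's
inequality for countably many summands bounds its norm by `∑_j r ^ j = (1 - r)⁻¹` times that of `y`.
-/

section Minkowski

open MeasureTheory

variable {α β ι : Type*} [MeasurableSpace α] [MeasurableSpace β] [Countable ι] {p : ℝ≥0∞}
  {μ : Measure α} {ν : Measure β}

theorem eLpNorm_iSup_of_directed {f : ι → α → ℝ≥0∞} (hf : ∀ i, AEMeasurable (f i) μ)
    (hdir : Directed (· ≤ ·) f) :
    eLpNorm (fun a ↦ ⨆ i, f i a) p μ = ⨆ i, eLpNorm (f i) p μ := by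
  rcases eq_or_ne p 0 with rfl | hp₀
  · simp
  refine le_antisymm ?_ (iSup_le fun i ↦ eLpNorm_mono_enorm fun a ↦ le_iSup (f · a) i)
  rcases eq_or_ne p ∞ with rfl | hp
  · simp only [eLpNorm_exponent_top]
    refine essSup_le_of_ae_le _ ?_
    filter_upwards [ae_all_iff.2 fun i ↦ enorm_ae_le_eLpNormEssSup (f i) μ] with a ha
    exact iSup_mono ha
  · have hq : 0 < p.toReal := ENNReal.toReal_pos hp₀ hp
    have rpow_iSup {r : ℝ} (hr : 0 < r) (u : ι → ℝ≥0∞) : (⨆ i, u i) ^ r = ⨆ i, u i ^ r :=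
      (ENNReal.orderIsoRpow r hr).map_iSup u
    have hdir_rpow : Directed (· ≤ ·) fun i a ↦ f i a ^ p.toReal :=
      hdir.mono_comp (g := fun u a ↦ u a ^ p.toReal) _ fun u v huv a ↦
        ENNReal.rpow_le_rpow (huv a) hq.le
    simp only [eLpNorm_eq_lintegral_rpow_enorm_toReal hp₀ hp, enorm_eq_self, rpow_iSup hq,
      lintegral_iSup_directed (fun i ↦ (hf i).pow_const _) hdir_rpow,
      rpow_iSup (one_div_pos.2 hq), le_refl]

theorem eLpNorm_tsum_le (hp : 1 ≤ p) {f : ι → α → ℝ≥0∞} (hf : ∀ i, AEMeasurable (f i) μ) :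
    eLpNorm (fun a ↦ ∑' i, f i a) p μ ≤ ∑' i, eLpNorm (f i) p μ := by
  have hdir : Directed (· ≤ ·) fun (s : Finset ι) a ↦ ∑ i ∈ s, f i a :=
    Monotone.directed_le fun s t hst a ↦ Finset.sum_le_sum_of_subset hst
  simp only [ENNReal.tsum_eq_iSup_sum]
  rw [eLpNorm_iSup_of_directed (fun s ↦ Finset.aemeasurable_fun_sum s fun i _ ↦ hf i) hdir]
  refine iSup_mono fun s ↦ ?_
  simpa only [Finset.sum_fn] using
    eLpNorm_sum_le (s := s) (fun i _ ↦ (hf i).aestronglyMeasurable) hp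

theorem eLpNorm_tsum_mul_comp_le (hp : 1 ≤ p) (w : ι → ℝ≥0∞) {T : ι → α → β}
    (hT : ∀ i, MeasurePreserving (T i) μ ν) {g : β → ℝ≥0∞} (hg : AEMeasurable g ν) :
    eLpNorm (fun a ↦ ∑' i, w i * g (T i a)) p μ ≤ (∑' i, w i) * eLpNorm g p ν := by
  have hgT (i : ι) : AEMeasurable (g ∘ T i) μ :=
    hg.comp_quasiMeasurePreserving (hT i).quasiMeasurePreserving
  calc eLpNorm (fun a ↦ ∑' i, w i * g (T i a)) p μ
      ≤ ∑' i, eLpNorm (fun a ↦ w i * g (T i a)) p μ :=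
        eLpNorm_tsum_le hp fun i ↦ (hgT i).const_mul (w i)
    _ ≤ ∑' i, w i * eLpNorm (g ∘ T i) p μ :=
        ENNReal.tsum_le_tsum fun i ↦ eLpNorm_le_mul_eLpNorm_of_ae_le_mul'' p
          (hgT i).aestronglyMeasurable (.of_forall fun _ ↦ le_rfl)
    _ = (∑' i, w i) * eLpNorm g p ν := by
        simp only [eLpNorm_comp_measurePreserving hg.aestronglyMeasurable (hT _),
          ENNReal.tsum_mul_right]

theorem zlpNorm_eq_eLpNorm_count (hp : p ≠ 0) (y : ℤ → ℝ≥0∞) :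
    zlpNorm p y = eLpNorm y p .count := by
  unfold zlpNorm
  split_ifs with hp_top
  · simp [hp_top]
  · simp [eLpNorm_eq_lintegral_rpow_enorm_toReal hp hp_top, lintegral_count]

end Minkowski

section Hardy

open MeasureTheory

theorem tsum_int_le_eq_tsum_nat_sub {M : Type*} [AddCommMonoid M] [TopologicalSpace M] (f : ℤ → M)
    (k : ℤ) : ∑' m : {m : ℤ // m ≤ k}, f m = ∑' j : ℕ, f (k - j) := by
  let e : ℕ ≃ {m : ℤ // m ≤ k} :=
    { toFun j := ⟨k - j, by omega⟩
      invFun m := (k - m).toNat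
      left_inv j := by simp
      right_inv := fun ⟨m, hm⟩ ↦ Subtype.ext (by simp only; omega) }
  exact (e.tsum_eq fun m ↦ f m).symm

theorem le_pow_mul_sub_of_succ_le_mul {M : Type*} [Monoid M] [Preorder M] [MulLeftMono M]
    {σ : ℤ → M} {r : M} (h : ∀ k, σ (k + 1) ≤ r * σ k) (k : ℤ) (j : ℕ) :
    σ k ≤ r ^ j * σ (k - j) := by
  induction j with
  | zero => simp
  | succ j ih =>
    calc σ k ≤ r ^ j * σ (k - (j + 1 : ℕ) + 1) := by simpa [sub_add_eq_sub_sub] using ih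
      _ ≤ r ^ j * (r * σ (k - (j + 1 : ℕ))) := by gcongr; exact h _
      _ = r ^ (j + 1) * σ (k - (j + 1 : ℕ)) := by rw [pow_succ, mul_assoc]

variable {p r : ℝ≥0∞} {σ : ℤ → ℝ≥0∞}

theorem mul_tsum_le_tsum_pow_mul (hσ : ∀ k, σ (k + 1) ≤ r * σ k) (x : ℤ → ℝ≥0∞) (k : ℤ) :
    σ k * ∑' m : {m : ℤ // m ≤ k}, x m ≤ ∑' j : ℕ, r ^ j * (σ (k - j) * x (k - j)) := by
  rw [tsum_int_le_eq_tsum_nat_sub, ← ENNReal.tsum_mul_left]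
  refine ENNReal.tsum_le_tsum fun j ↦ ?_
  rw [← mul_assoc]
  gcongr
  exact le_pow_mul_sub_of_succ_le_mul hσ k j

theorem zlpNorm_mul_tsum_le (hp : 1 ≤ p) (hσ : ∀ k, σ (k + 1) ≤ r * σ k) (x : ℤ → ℝ≥0∞) :
    zlpNorm p (fun k ↦ σ k * ∑' m : {m : ℤ // m ≤ k}, x m)
      ≤ (1 - r)⁻¹ * zlpNorm p (fun k ↦ σ k * x k) := by
  have hshift (j : ℕ) : MeasurePreserving (fun k : ℤ ↦ k - j) .count .count :=
    measurePreserving_sub_right .count (j : ℤ)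
  simp only [zlpNorm_eq_eLpNorm_count (one_pos.trans_le hp).ne']
  calc eLpNorm (fun k ↦ σ k * ∑' m : {m : ℤ // m ≤ k}, x m) p .count
      ≤ eLpNorm (fun k : ℤ ↦ ∑' j : ℕ, r ^ j * (σ (k - j) * x (k - j))) p .count :=
        eLpNorm_mono_enorm (mul_tsum_le_tsum_pow_mul hσ x)
    _ ≤ (∑' j : ℕ, r ^ j) * eLpNorm (fun k ↦ σ k * x k) p .count :=
        eLpNorm_tsum_mul_comp_le hp (fun j ↦ r ^ j) hshift (g := fun k ↦ σ k * x k)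
          Measurable.of_discrete.aemeasurable
    _ = (1 - r)⁻¹ * eLpNorm (fun k ↦ σ k * x k) p .count := by rw [ENNReal.tsum_geometric]

theorem zlpNorm_mul_le_zlpNorm_mul_tsum (hp : p ≠ 0) (σ x : ℤ → ℝ≥0∞) :
    zlpNorm p (fun k ↦ σ k * x k)
      ≤ zlpNorm p (fun k ↦ σ k * ∑' m : {m : ℤ // m ≤ k}, x m) := by
  simp only [zlpNorm_eq_eLpNorm_count hp]
  refine eLpNorm_mono_enorm fun k ↦ mul_le_mul_right ?_ (σ k)
  exact ENNReal.le_tsum (f := fun m : {m : ℤ // m ≤ k} ↦ x m) ⟨k, le_rfl⟩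

end Hardy

theorem discrete_hardy_below (p : ℝ≥0∞) (hp : 1 ≤ p) (r : ℝ) (hr0 : 0 < r) (hr1 : r < 1) :
    ∃ C > (0:ℝ), ∀ (σ : ℤ → ℝ) (x : ℤ → ℝ),
      (∀ k, 0 < σ k) → (∀ k, σ (k + 1) ≤ r * σ k) → (∀ k, 0 ≤ x k) →
      zlpNorm p (fun k => ENNReal.ofReal (σ k) * ∑' m : {m : ℤ // m ≤ k}, ENNReal.ofReal (x m))
          ≤ ENNReal.ofReal C * zlpNorm p (fun k => ENNReal.ofReal (σ k * x k)) ∧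
      zlpNorm p (fun k => ENNReal.ofReal (σ k * x k))
          ≤ zlpNorm p (fun k => ENNReal.ofReal (σ k) *
              ∑' m : {m : ℤ // m ≤ k}, ENNReal.ofReal (x m)) := by
  have hC : 0 < 1 - r := sub_pos.2 hr1
  refine ⟨(1 - r)⁻¹, inv_pos.2 hC, fun σ x hσ hratio _ ↦ ?_⟩
  have hratio' (k : ℤ) :
      ENNReal.ofReal (σ (k + 1)) ≤ ENNReal.ofReal r * ENNReal.ofReal (σ k) := by
    rw [← ENNReal.ofReal_mul hr0.le]
    exact ENNReal.ofReal_le_ofReal (hratio k)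
  simp only [ENNReal.ofReal_mul (hσ _).le, ENNReal.ofReal_inv_of_pos hC,
    ENNReal.ofReal_sub 1 hr0.le, ENNReal.ofReal_one]
  exact ⟨zlpNorm_mul_tsum_le hp hratio' (fun k ↦ ENNReal.ofReal (x k)),
    zlpNorm_mul_le_zlpNorm_mul_tsum (one_pos.trans_le hp).ne' _ fun k ↦ ENNReal.ofReal (x k)⟩
end

section
/- Let b ∈ SV satisfy b(t²) ∼ b(t) on (0,∞), with associated functions B₀ and B∞. Assume there exist real numbers α < 0 < β and the function u ↦ u^{−α}·B₀(u) is almost decreasing on (0,1] while u ↦ u^{−β}·B∞(u) is almost increasing on (0,1] (i.e. ρ_{B₀} < 0 < π_{B∞}). Then there exists a function Φ:(0,∞)→(0,∞) with Φ ∼ b such that sup_{k∈ℤ} Φ(λ_{k+1})/Φ(λ_k) < 1. -/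
open Set MeasureTheory Real

/-- `f ∼ g` on `S`: there are `c, C > 0` with `c * g x ≤ f x ≤ C * g x` for all `x ∈ S`. -/
def EquivOn (f g : ℝ → ℝ) (S : Set ℝ) : Prop :=
  ∃ c > (0:ℝ), ∃ C > (0:ℝ), ∀ x ∈ S, c * g x ≤ f x ∧ f x ≤ C * g x

/-- The associated function `B₀(u) = b(e^{1 - 1/u})`. -/
noncomputable def assocB0 (b : ℝ → ℝ) (u : ℝ) : ℝ := b (Real.exp (1 - 1 / u))

/-- The associated function `B∞(u) = b(e^{1/u - 1})`. -/
noncomputable def assocBinf (b : ℝ → ℝ) (u : ℝ) : ℝ := b (Real.exp (1 / u - 1))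

/-- `ℓ(t) = 1 + |log t|`. -/
noncomputable def ell (t : ℝ) : ℝ := 1 + |Real.log t|

/-- The sequence `λ_k`: `λ_k = e^{1 - e^{-k}}` for `k ≤ -1` and `λ_k = e^{e^k - 1}` for `k ≥ 0`. -/
noncomputable def lam (k : ℤ) : ℝ :=
  if k < 0 then Real.exp (1 - Real.exp (-(k : ℝ))) else Real.exp (Real.exp (k : ℝ) - 1)

/-! Set `w t = ℓ(t)⁻¹` for `t ≤ 1` and `w t = ℓ(t)` for `t > 1`, so that `w` is increasing and
`w (λ_k) = e ^ k`. The substitution `u = ℓ(t)⁻¹` turns the two growth conditions into one: with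
`δ = min (-α) β`, the function `w ^ δ * b` is almost decreasing on `(0,∞)`, hence equivalent to
its least decreasing majorant `g`. Then `Φ = g / w ^ δ` is equivalent to `b`, and one step
`λ_k ↦ λ_{k+1}` decreases it by a factor of at least `e ^ δ`. -/

namespace AlmostDecreasingOn

variable {f g : ℝ → ℝ} {S T : Set ℝ}

lemma of_antitoneOn (h : AntitoneOn f S) : AlmostDecreasingOn f S :=
  ⟨1, one_pos, fun s hs t ht hst => by simpa only [one_mul] using h hs ht hst⟩

lemma congr (h : AlmostDecreasingOn f S) (hfg : EqOn f g S) : AlmostDecreasingOn g S := by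
  obtain ⟨C, hC, h⟩ := h
  refine ⟨C, hC, fun s hs t ht hst => ?_⟩
  rw [← hfg hs, ← hfg ht]
  exact h s hs t ht hst

lemma comp_monotoneOn {φ : ℝ → ℝ} (h : AlmostDecreasingOn f T) (hφ : MonotoneOn φ S)
    (hST : MapsTo φ S T) : AlmostDecreasingOn (fun t => f (φ t)) S := by
  obtain ⟨C, hC, h⟩ := h
  exact ⟨C, hC, fun s hs t ht hst => h _ (hST hs) _ (hST ht) (hφ hs ht hst)⟩

lemma mul (hf : AlmostDecreasingOn f S) (hg : AlmostDecreasingOn g S)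
    (hf₀ : ∀ t ∈ S, 0 ≤ f t) (hg₀ : ∀ t ∈ S, 0 ≤ g t) :
    AlmostDecreasingOn (fun t => f t * g t) S := by
  obtain ⟨C, hC, hf⟩ := hf
  obtain ⟨D, hD, hg⟩ := hg
  refine ⟨C * D, mul_pos hC hD, fun s hs t ht hst => ?_⟩
  calc f t * g t ≤ (C * f s) * (D * g s) :=
        mul_le_mul (hf s hs t ht hst) (hg s hs t ht hst) (hg₀ t ht) (mul_nonneg hC.le (hf₀ s hs))
    _ = C * D * (f s * g s) := mul_mul_mul_comm ..

lemma rpow_mul_of_le {w : ℝ → ℝ} {p q : ℝ} (h : AlmostDecreasingOn (fun t => w t ^ p * f t) S)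
    (hqp : q ≤ p) (hw : MonotoneOn w S) (hw₀ : ∀ t ∈ S, 0 < w t) (hf₀ : ∀ t ∈ S, 0 ≤ f t) :
    AlmostDecreasingOn (fun t => w t ^ q * f t) S := by
  have anti : AntitoneOn (fun t => w t ^ (q - p)) S := fun s hs t ht hst =>
    rpow_le_rpow_of_nonpos (hw₀ s hs) (hw hs ht hst) (sub_nonpos.2 hqp)
  refine ((of_antitoneOn anti).mul h (fun t ht => rpow_nonneg (hw₀ t ht).le _)
    fun t ht => mul_nonneg (rpow_nonneg (hw₀ t ht).le _) (hf₀ t ht)).congr fun t ht => ?_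
  simp only [← mul_assoc, ← rpow_add (hw₀ t ht), sub_add_cancel]

lemma exists_one_le (h : AlmostDecreasingOn f S) (hf₀ : ∀ t ∈ S, 0 ≤ f t) :
    ∃ C ≥ (1 : ℝ), ∀ s ∈ S, ∀ t ∈ S, s ≤ t → f t ≤ C * f s := by
  obtain ⟨C, -, h⟩ := h
  exact ⟨max C 1, le_max_right C 1, fun s hs t ht hst => (h s hs t ht hst).trans
    (mul_le_mul_of_nonneg_right (le_max_left C 1) (hf₀ s hs))⟩

lemma union_right {c : ℝ} (hS : AlmostDecreasingOn f S) (hT : AlmostDecreasingOn f T)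
    (hSc : IsGreatest S c) (hTc : IsLeast T c) (hf₀ : ∀ t ∈ S ∪ T, 0 ≤ f t) :
    AlmostDecreasingOn f (S ∪ T) := by
  obtain ⟨C, hC, hS⟩ := hS.exists_one_le fun t ht => hf₀ t (.inl ht)
  obtain ⟨D, hD, hT⟩ := hT.exists_one_le fun t ht => hf₀ t (.inr ht)
  have hC₀ : 0 ≤ C := zero_le_one.trans hC
  have hD₀ : 0 ≤ D := zero_le_one.trans hD
  have le_of_mem_right : ∀ s ∈ T, ∀ t ∈ T, s ≤ t → f t ≤ D * C * f s := fun s hs t ht hst =>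
    (hT s hs t ht hst).trans
      (mul_le_mul_of_nonneg_right (le_mul_of_one_le_right hD₀ hC) (hf₀ s (.inr hs)))
  refine ⟨D * C, by positivity, ?_⟩
  rintro s (hs | hs) t (ht | ht) hst
  · exact (hS s hs t ht hst).trans
      (mul_le_mul_of_nonneg_right (le_mul_of_one_le_left hC₀ hD) (hf₀ s (.inl hs)))
  · calc f t ≤ D * f c := hT c hTc.1 t ht (hTc.2 ht)
      _ ≤ D * (C * f s) := mul_le_mul_of_nonneg_left (hS s hs c hSc.1 (hSc.2 hs)) hD₀
      _ = D * C * f s := (mul_assoc ..).symm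
  · obtain rfl : t = c := le_antisymm (hSc.2 ht) ((hTc.2 hs).trans hst)
    exact le_of_mem_right s hs t hTc.1 hst
  · exact le_of_mem_right s hs t ht hst

lemma exists_antitoneOn_equivOn (h : AlmostDecreasingOn f S) :
    ∃ g : ℝ → ℝ, AntitoneOn g S ∧ EquivOn g f S := by
  obtain ⟨C, hC, h⟩ := h
  have le_bound : ∀ t ∈ S, ∀ y ∈ f '' (S ∩ Ici t), y ≤ C * f t := by
    rintro t ht _ ⟨s, ⟨hs, hts⟩, rfl⟩
    exact h t ht s hs hts
  have self_mem : ∀ t ∈ S, f t ∈ f '' (S ∩ Ici t) := fun t ht =>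
    mem_image_of_mem f ⟨ht, self_mem_Ici⟩
  refine ⟨fun t => sSup (f '' (S ∩ Ici t)), fun s hs t ht hst => ?_, 1, one_pos, C, hC,
    fun t ht => ⟨?_, csSup_le ⟨_, self_mem t ht⟩ (le_bound t ht)⟩⟩
  · exact csSup_le_csSup ⟨_, le_bound s hs⟩ ⟨_, self_mem t ht⟩
      (image_mono (inter_subset_inter_right S (Ici_subset_Ici.2 hst)))
  · rw [one_mul]
    exact le_csSup ⟨_, le_bound t ht⟩ (self_mem t ht)

lemma exists_equivOn_antitoneOn_mul {v : ℝ → ℝ} (h : AlmostDecreasingOn (fun t => v t * f t) S)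
    (hv : ∀ t ∈ S, 0 < v t) :
    ∃ Φ : ℝ → ℝ, EquivOn Φ f S ∧ AntitoneOn (fun t => v t * Φ t) S := by
  obtain ⟨g, hg, c, hc, C, hC, hgf⟩ := h.exists_antitoneOn_equivOn
  refine ⟨fun t => g t / v t, ⟨c, hc, C, hC, fun t ht => ?_⟩, hg.congr fun t ht => ?_⟩
  · rw [le_div_iff₀ (hv t ht), div_le_iff₀ (hv t ht), mul_assoc, mul_assoc, mul_comm (f t)]
    exact hgf t ht
  · exact (mul_div_cancel₀ (g t) (hv t ht).ne').symm

end AlmostDecreasingOn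

lemma AlmostIncreasingOn.comp_antitoneOn {f φ : ℝ → ℝ} {S T : Set ℝ}
    (h : AlmostIncreasingOn f T) (hφ : AntitoneOn φ S) (hST : MapsTo φ S T) :
    AlmostDecreasingOn (fun t => f (φ t)) S := by
  obtain ⟨C, hC, h⟩ := h
  exact ⟨C, hC, fun s hs t ht hst => h _ (hST ht) _ (hST hs) (hφ hs ht hst)⟩

lemma EquivOn.pos {f g : ℝ → ℝ} {S : Set ℝ} (h : EquivOn f g S) (hg : ∀ t ∈ S, 0 < g t) :
    ∀ t ∈ S, 0 < f t := by
  obtain ⟨c, hc, _, _, h⟩ := h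
  exact fun t ht => (mul_pos hc (hg t ht)).trans_le (h t ht).1

lemma one_le_ell (t : ℝ) : 1 ≤ ell t :=
  le_add_of_nonneg_right (abs_nonneg _)

lemma ell_pos (t : ℝ) : 0 < ell t :=
  one_pos.trans_le (one_le_ell t)

lemma inv_ell_mem_Ioc (t : ℝ) : (ell t)⁻¹ ∈ Ioc (0 : ℝ) 1 :=
  ⟨inv_pos.2 (ell_pos t), inv_le_one_of_one_le₀ (one_le_ell t)⟩

lemma ell_of_mem_Ioc {t : ℝ} (ht : t ∈ Ioc (0 : ℝ) 1) : ell t = 1 - log t := by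
  rw [ell, abs_of_nonpos (log_nonpos ht.1.le ht.2), sub_eq_add_neg]

lemma ell_of_one_le {t : ℝ} (ht : 1 ≤ t) : ell t = 1 + log t := by
  rw [ell, abs_of_nonneg (log_nonneg ht)]

lemma antitoneOn_ell : AntitoneOn ell (Ioc 0 1) := fun s hs t ht hst => by
  rw [ell_of_mem_Ioc hs, ell_of_mem_Ioc ht]
  exact sub_le_sub_left (log_le_log hs.1 hst) 1

lemma monotoneOn_inv_ell : MonotoneOn (fun t => (ell t)⁻¹) (Ioc 0 1) := fun _ hs t ht hst =>
  inv_anti₀ (ell_pos t) (antitoneOn_ell hs ht hst)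

lemma monotoneOn_ell : MonotoneOn ell (Ici 1) := fun s hs t ht hst => by
  rw [ell_of_one_le hs, ell_of_one_le ht]
  exact add_le_add_right (log_le_log (one_pos.trans_le hs) hst) 1

lemma antitoneOn_inv_ell : AntitoneOn (fun t => (ell t)⁻¹) (Ici 1) := fun s hs _ ht hst =>
  inv_anti₀ (ell_pos s) (monotoneOn_ell hs ht hst)

lemma assocB0_inv_ell (b : ℝ → ℝ) {t : ℝ} (ht : t ∈ Ioc (0 : ℝ) 1) :
    assocB0 b (ell t)⁻¹ = b t := by
  rw [assocB0, one_div, inv_inv, ell_of_mem_Ioc ht, sub_sub_cancel, exp_log ht.1]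

lemma assocBinf_inv_ell (b : ℝ → ℝ) {t : ℝ} (ht : 1 ≤ t) : assocBinf b (ell t)⁻¹ = b t := by
  rw [assocBinf, one_div, inv_inv, ell_of_one_le ht, add_sub_cancel_left,
    exp_log (one_pos.trans_le ht)]

/-- The increasing logarithmic weight, equal to `ℓ⁻¹` on `(0,1]` and to `ℓ` on `[1,∞)`. Its
logarithm is a continuous version of the index `k` of the sequence `λ_k`. -/
noncomputable def logWeight (t : ℝ) : ℝ :=
  if t ≤ 1 then (ell t)⁻¹ else ell t

lemma logWeight_pos (t : ℝ) : 0 < logWeight t := by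
  unfold logWeight
  split_ifs
  exacts [inv_pos.2 (ell_pos t), ell_pos t]

lemma logWeight_of_le_one {t : ℝ} (ht : t ≤ 1) : logWeight t = (ell t)⁻¹ :=
  if_pos ht

lemma logWeight_of_one_le {t : ℝ} (ht : 1 ≤ t) : logWeight t = ell t := by
  rcases ht.eq_or_lt with rfl | ht
  · simp [logWeight, ell]
  · exact if_neg ht.not_ge

lemma monotoneOn_logWeight : MonotoneOn logWeight (Ioi 0) := by
  rw [← Ioc_union_Ici_eq_Ioi (one_pos : (0 : ℝ) < 1)]
  exact (monotoneOn_inv_ell.congr fun t ht => (logWeight_of_le_one ht.2).symm).union_right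
    (monotoneOn_ell.congr fun t ht => (logWeight_of_one_le ht).symm)
    (isGreatest_Ioc one_pos) isLeast_Ici

lemma lam_pos (k : ℤ) : 0 < lam k := by
  unfold lam
  split_ifs <;> exact exp_pos _

lemma logWeight_lam (k : ℤ) : logWeight (lam k) = exp k := by
  unfold lam
  split_ifs with hk
  · have one_le : 1 ≤ exp (-(k : ℝ)) := one_le_exp (neg_nonneg.2 (Int.cast_nonpos.2 hk.le))
    have mem : exp (1 - exp (-(k : ℝ))) ∈ Ioc (0 : ℝ) 1 :=
      ⟨exp_pos _, exp_le_one_iff.2 (sub_nonpos.2 one_le)⟩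
    rw [logWeight_of_le_one mem.2, ell_of_mem_Ioc mem, log_exp, sub_sub_cancel, exp_neg, inv_inv]
  · have one_le : 1 ≤ exp (k : ℝ) := one_le_exp (Int.cast_nonneg (not_lt.1 hk))
    have one_le_lam : 1 ≤ exp (exp (k : ℝ) - 1) := one_le_exp (sub_nonneg.2 one_le)
    rw [logWeight_of_one_le one_le_lam, ell_of_one_le one_le_lam, log_exp, add_sub_cancel]

lemma strictMono_lam : StrictMono lam := fun j k hjk =>
  monotoneOn_logWeight.reflect_lt (lam_pos j) (lam_pos k) <| by
    rw [logWeight_lam, logWeight_lam, exp_lt_exp]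
    exact Int.cast_lt.2 hjk

lemma almostDecreasingOn_Ioc_logWeight_rpow_mul {b : ℝ → ℝ} {p : ℝ}
    (h : AlmostDecreasingOn (fun u => u ^ p * assocB0 b u) (Ioc 0 1)) :
    AlmostDecreasingOn (fun t => logWeight t ^ p * b t) (Ioc 0 1) := by
  refine (h.comp_monotoneOn monotoneOn_inv_ell fun t _ => inv_ell_mem_Ioc t).congr fun t ht => ?_
  simp only [assocB0_inv_ell b ht, logWeight_of_le_one ht.2]

lemma almostDecreasingOn_Ici_logWeight_rpow_mul {b : ℝ → ℝ} {p : ℝ}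
    (h : AlmostIncreasingOn (fun u => u ^ (-p) * assocBinf b u) (Ioc 0 1)) :
    AlmostDecreasingOn (fun t => logWeight t ^ p * b t) (Ici 1) := by
  refine (h.comp_antitoneOn antitoneOn_inv_ell fun t _ => inv_ell_mem_Ioc t).congr fun t ht => ?_
  simp only [assocBinf_inv_ell b ht, logWeight_of_one_le ht, inv_rpow (ell_pos t).le,
    rpow_neg (ell_pos t).le, inv_inv]

lemma almostDecreasingOn_Ioi_logWeight_rpow_mul {b : ℝ → ℝ} {p q : ℝ}
    (hb : ∀ t ∈ Ioi (0 : ℝ), 0 ≤ b t)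
    (hB0 : AlmostDecreasingOn (fun u => u ^ p * assocB0 b u) (Ioc 0 1))
    (hBinf : AlmostIncreasingOn (fun u => u ^ (-q) * assocBinf b u) (Ioc 0 1)) :
    AlmostDecreasingOn (fun t => logWeight t ^ min p q * b t) (Ioi 0) := by
  have hIci : Ici (1 : ℝ) ⊆ Ioi 0 := Ici_subset_Ioi.2 one_pos
  have left := (almostDecreasingOn_Ioc_logWeight_rpow_mul hB0).rpow_mul_of_le (min_le_left p q)
    (monotoneOn_logWeight.mono Ioc_subset_Ioi_self) (fun t _ => logWeight_pos t)
    fun t ht => hb t ht.1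
  have right := (almostDecreasingOn_Ici_logWeight_rpow_mul hBinf).rpow_mul_of_le
    (min_le_right p q) (monotoneOn_logWeight.mono hIci) (fun t _ => logWeight_pos t)
    fun t ht => hb t (hIci ht)
  have union := Ioc_union_Ici_eq_Ioi (one_pos : (0 : ℝ) < 1)
  rw [← union]
  refine left.union_right right (isGreatest_Ioc one_pos) isLeast_Ici fun t ht => ?_
  exact mul_nonneg (rpow_nonneg (logWeight_pos t).le _) (hb t (union.subset ht))

lemma lam_succ_div_lam_le_exp_neg {Φ : ℝ → ℝ} {δ : ℝ}
    (h : AntitoneOn (fun t => logWeight t ^ δ * Φ t) (Ioi 0)) {k : ℤ} (hΦ : 0 < Φ (lam k)) :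
    Φ (lam (k + 1)) / Φ (lam k) ≤ exp (-δ) := by
  have weighted : exp ((k + 1) * δ) * Φ (lam (k + 1)) ≤ exp (k * δ) * Φ (lam k) := by
    simpa only [logWeight_lam, ← exp_mul, Int.cast_add, Int.cast_one] using
      h (lam_pos k) (lam_pos (k + 1)) (strictMono_lam (lt_add_one k)).le
  have split : exp (k * δ) = exp ((k + 1) * δ) * exp (-δ) := by
    rw [← exp_add]
    ring_nf
  rw [split, mul_assoc] at weighted
  exact (div_le_iff₀ hΦ).2 (le_of_mul_le_mul_left weighted (exp_pos _))

theorem exists_decreasing_discretization_general {b : ℝ → ℝ} (hb : ∀ t ∈ Ioi (0 : ℝ), 0 < b t)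
    {α β : ℝ} (hα : α < 0) (hβ : 0 < β)
    (hB0 : AlmostDecreasingOn (fun u => u ^ (-α) * assocB0 b u) (Ioc 0 1))
    (hBinf : AlmostIncreasingOn (fun u => u ^ (-β) * assocBinf b u) (Ioc 0 1)) :
    ∃ Φ : ℝ → ℝ, EquivOn Φ b (Ioi 0) ∧
      ∃ r < (1 : ℝ), ∀ k : ℤ, Φ (lam (k + 1)) / Φ (lam k) ≤ r := by
  have hδ : 0 < min (-α) β := lt_min (neg_pos.2 hα) hβ
  obtain ⟨Φ, hΦb, hΦ⟩ :=
    (almostDecreasingOn_Ioi_logWeight_rpow_mul (fun t ht => (hb t ht).le) hB0 hBinf)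
      |>.exists_equivOn_antitoneOn_mul fun t _ => rpow_pos_of_pos (logWeight_pos t) _
  exact ⟨Φ, hΦb, exp (-min (-α) β), exp_lt_one_iff.2 (neg_neg_of_pos hδ),
    fun k => lam_succ_div_lam_le_exp_neg hΦ (hΦb.pos hb _ (lam_pos k))⟩

theorem exists_decreasing_discretization (b : ℝ → ℝ) (hb : SlowlyVarying b)
    (hsq : EquivOn (fun t => b (t ^ 2)) b (Ioi 0))
    (α β : ℝ) (hα : α < 0) (hβ : 0 < β)
    (hB0 : AlmostDecreasingOn (fun u => u ^ (-α) * assocB0 b u) (Ioc 0 1))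
    (hBinf : AlmostIncreasingOn (fun u => u ^ (-β) * assocBinf b u) (Ioc 0 1)) :
    ∃ Φ : ℝ → ℝ, EquivOn Φ b (Ioi 0) ∧
      ∃ r < (1:ℝ), ∀ k : ℤ, Φ (lam (k + 1)) / Φ (lam k) ≤ r :=
  exists_decreasing_discretization_general hb.2.1 hα hβ hB0 hBinf
end
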